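/- Let m be a positive integer and let {S(α_i,0) : i = 1,...,k} be an m-EEC of homogeneous Beatty sequences with all α_i positive and at least one α_i irrational. Then the set of indices i with α_i irrational has even cardinality, and these indices can be partitioned into pairs {i, j} such that 1/α_i + 1/α_j is an integer for each pair. -/

import Mathlib

/-!
Write `B t = {t} - 1/2` for the sawtooth function on the circle `ℝ / ℤ` (the periodized first
Bernoulli polynomial) and `x i` for the class of `-1 / α i`. For `N ≥ 1` the integer `N` occurs
`⌈(N + 1) / α⌉ - ⌈N / α⌉` times in `S(α, 0)`, and `⌈n / α i⌉ = n / α i + 1/2 + B (n • x i)`. An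
eventual exact cover therefore makes the bounded sequence `∑ i, B (n • x i)` eventually constant
(`eventually_sum_bernoulli_eq`).

Now take Cesàro means against the character `n ↦ exp (-2πi n θ)`, for `θ` of infinite order in the
circle. The constant and the periodic terms coming from rational `α i` have mean zero. For `x` of
infinite order, the mean of `B (n • x) exp (-2πi n θ)` is the Fourier coefficient
`c = -1 / (2πi h)` if `θ = h • x`, and zero if `θ` is not a multiple of `x`
(`hasMean_bernoulli_ratioCoeff`). This is Weyl equidistribution, proved for continuous functions by
density of trigonometric polynomials and carried over to `B` by cutting off its jump. Hence for
every such `θ` the sum of `1 / h`, over the irrational `α i` with `θ = h • x i`, vanishes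
(`sum_ratioCoeff_eq_zero`).

The rest is algebra (`pair_off_of_sum_eq_zero`): choose `x i` which is not a multiple `h • x j` with
`|h| ≥ 2` of any `x j`. At `θ = x i` only the `j` with `x j = ± x i` contribute, with values `± 1`,
so some `x j` equals `-x i`, which means that `1 / α i + 1 / α j` is an integer. The contributions
of `i` and `j` cancel for all `θ`, so this pair can be removed and the argument repeated.
-/

open scoped BigOperators

/-- The number of positive integers `n` with `⌊n·α + β⌋ = N`, i.e. the multiplicity
of `N` in the Beatty sequence `S(α,β)`. -/
noncomputable def beattyCount (α β : ℝ) (N : ℤ) : ℕ :=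
  Nat.card {n : ℕ // 0 < n ∧ ⌊(n : ℝ) * α + β⌋ = N}

/-- The family `{S(α i, β i)}` is an eventual exact `m`-cover. -/
def IsEEC {k : ℕ} (α β : Fin k → ℝ) (m : ℕ) : Prop :=
  ∃ N₀ : ℤ, ∀ N : ℤ, N ≥ N₀ → (∑ i, beattyCount (α i) (β i) N) = m

open Filter Topology MeasureTheory

/-! ### Cesàro means -/

/-- The sequence `u` has Cesàro mean `c`, i.e. `(1/N) ∑_{n < N} u n → c`. -/
def HasMean (u : ℕ → ℂ) (c : ℂ) : Prop :=
  Tendsto (fun N : ℕ => (N : ℝ)⁻¹ • ∑ n ∈ Finset.range N, u n) atTop (𝓝 c)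

theorem HasMean.add {u v : ℕ → ℂ} {c d : ℂ} (hu : HasMean u c) (hv : HasMean v d) :
    HasMean (fun n => u n + v n) (c + d) := by
  simpa only [HasMean, Finset.sum_add_distrib, smul_add] using Tendsto.add hu hv

theorem HasMean.const_mul {u : ℕ → ℂ} {c : ℂ} (a : ℂ) (hu : HasMean u c) :
    HasMean (fun n => a * u n) (a * c) := by
  simpa only [HasMean, ← Finset.mul_sum, mul_smul_comm] using Tendsto.const_mul a hu

theorem HasMean.sum {ι : Type*} (s : Finset ι) {u : ι → ℕ → ℂ} {c : ι → ℂ}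
    (hu : ∀ i ∈ s, HasMean (u i) (c i)) :
    HasMean (fun n => ∑ i ∈ s, u i n) (∑ i ∈ s, c i) := by
  have h := tendsto_finsetSum s hu
  simp only [← Finset.smul_sum] at h
  simp only [HasMean]
  convert h using 3
  exact Finset.sum_comm

theorem hasMean_const (c : ℂ) : HasMean (fun _ => c) c :=
  Tendsto.cesaro_smul tendsto_const_nhds

theorem HasMean.zero_of_eventually {u : ℕ → ℂ} (h : ∀ᶠ n in atTop, u n = 0) : HasMean u 0 :=
  Tendsto.cesaro_smul (tendsto_const_nhds.congr' (h.mono fun _ hn => hn.symm))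

theorem HasMean.unique {u : ℕ → ℂ} {c d : ℂ} (h : HasMean u c) (h' : HasMean u d) : c = d :=
  tendsto_nhds_unique h h'

/-- A bounded sequence which is multiplied by `w ≠ 1` under a shift by `q` has mean zero, because
`(w - 1) ∑_{n < N} u n` telescopes to at most `2 q` terms. -/
theorem HasMean.zero_of_shift {u : ℕ → ℂ} {w : ℂ} {q : ℕ} {C : ℝ} (hC : ∀ n, ‖u n‖ ≤ C)
    (hw : w ≠ 1) (hu : ∀ n, u (n + q) = w * u n) : HasMean u 0 := by
  have hw' : w - 1 ≠ 0 := sub_ne_zero.2 hw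
  have key : ∀ N, (w - 1) * ∑ n ∈ Finset.range N, u n =
      ∑ n ∈ Finset.range q, u (N + n) - ∑ n ∈ Finset.range q, u n := by
    intro N
    have h1 := Finset.sum_range_add u N q
    have h2 := Finset.sum_range_add u q N
    rw [add_comm q N, h1] at h2
    have h3 : ∑ n ∈ Finset.range N, u (q + n) = w * ∑ n ∈ Finset.range N, u n := by
      rw [Finset.mul_sum]
      exact Finset.sum_congr rfl fun n _ => by rw [add_comm, hu]
    rw [h3] at h2
    linear_combination -h2
  have hb : ∀ f : ℕ → ℕ, ‖∑ n ∈ Finset.range q, u (f n)‖ ≤ q * C := fun f => by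
    simpa using norm_sum_le_of_le (Finset.range q) (fun n _ => hC (f n))
  have hsum : ∀ N, ‖∑ n ∈ Finset.range N, u n‖ ≤ ‖w - 1‖⁻¹ * (q * C + q * C) := by
    intro N
    rw [← div_eq_inv_mul, le_div_iff₀ (norm_pos_iff.2 hw'), mul_comm, ← norm_mul, key]
    exact (norm_sub_le _ _).trans (add_le_add (hb _) (hb _))
  refine squeeze_zero_norm (a := fun N : ℕ => (N : ℝ)⁻¹ * (‖w - 1‖⁻¹ * (q * C + q * C))) ?_ ?_
  · intro N
    rw [norm_smul, norm_inv, Real.norm_natCast]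
    gcongr
    exact hsum N
  · simpa using tendsto_inv_atTop_nhds_zero_nat.mul_const (‖w - 1‖⁻¹ * (q * C + q * C))

/-- Means pass to limits: it suffices to approximate `u`, in upper Cesàro mean, by sequences that
have a mean. The error is controlled by a nonnegative sequence `e` having itself a small mean. -/
theorem HasMean.of_approx {u : ℕ → ℂ} {c : ℂ}
    (h : ∀ ε > 0, ∃ (v : ℕ → ℂ) (d : ℂ) (e : ℕ → ℝ) (η : ℝ), HasMean v d ∧
      HasMean (fun n => (e n : ℂ)) η ∧ (∀ n, ‖u n - v n‖ ≤ e n) ∧ η < ε ∧ ‖c - d‖ < ε) :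
    HasMean u c := by
  rw [HasMean, Metric.tendsto_atTop]
  intro ε hε
  obtain ⟨v, d, e, η, hv, he, huv, hη, hcd⟩ := h (ε / 3) (by positivity)
  have he' : Tendsto (fun N : ℕ => (N : ℝ)⁻¹ * ∑ n ∈ Finset.range N, e n) atTop (𝓝 η) := by
    have h2 := (Complex.continuous_re.tendsto _).comp he
    refine h2.congr fun N => ?_
    simp [← Complex.ofReal_sum]
  obtain ⟨N, hN⟩ := eventually_atTop.1
    (((Metric.tendsto_nhds.1 hv (ε / 3) (by positivity))).and (he'.eventually (gt_mem_nhds hη)))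
  refine ⟨N, fun n hn => ?_⟩
  obtain ⟨h1, h2⟩ := hN n hn
  have h3 : dist ((n : ℝ)⁻¹ • ∑ k ∈ Finset.range n, u k) ((n : ℝ)⁻¹ • ∑ k ∈ Finset.range n, v k)
      ≤ (n : ℝ)⁻¹ * ∑ k ∈ Finset.range n, e k := by
    rw [dist_eq_norm, ← smul_sub, ← Finset.sum_sub_distrib, norm_smul, norm_inv, Real.norm_natCast]
    gcongr
    exact norm_sum_le_of_le _ fun k _ => huv k
  have h4 : dist d c < ε / 3 := by rwa [dist_comm, dist_eq_norm]
  have h5 := dist_triangle4 ((n : ℝ)⁻¹ • ∑ k ∈ Finset.range n, u k)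
    ((n : ℝ)⁻¹ • ∑ k ∈ Finset.range n, v k) d c
  linarith

/-! ### The sawtooth function along orbits of the circle -/

theorem hasMean_fourier (ψ : UnitAddCircle) :
    HasMean (fun n => fourier 1 (n • ψ)) (if ψ = 0 then 1 else 0) := by
  split_ifs with h
  · simpa [h] using hasMean_const 1
  · refine HasMean.zero_of_shift (w := fourier 1 ψ) (q := 1) (C := 1) ?_ ?_ ?_
    · intro n
      rw [fourier_apply, Circle.norm_coe]
    · intro h1
      rw [fourier_one, ← fourier_eval_zero (T := 1) 1, fourier_one] at h1
      exact h (AddCircle.injective_toCircle one_ne_zero (Subtype.coe_injective h1))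
    · intro n
      simp only [fourier_one]
      rw [succ_nsmul', AddCircle.toCircle_add, Circle.coe_mul]

theorem norm_fourier_apply (k : ℤ) (x : UnitAddCircle) : ‖fourier k x‖ = 1 := by
  rw [fourier_apply, Circle.norm_coe]

theorem integrable_of_continuous_circle (f : C(UnitAddCircle, ℂ)) :
    Integrable f AddCircle.haarAddCircle :=
  (map_continuous f).integrable_of_hasCompactSupport (HasCompactSupport.of_compactSpace _)

/-- Twisted Weyl equidistribution: the identity between Cesàro means and integrals against a
weight `φ` passes from the characters to all continuous functions, by density of trigonometric
polynomials. -/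
theorem hasMean_continuous {x θ : UnitAddCircle} {φ : C(UnitAddCircle, ℂ)}
    (hφ : ∀ t, ‖φ t‖ ≤ 1)
    (hk : ∀ k : ℤ, HasMean (fun n : ℕ => fourier k (n • x) * fourier (-1) (n • θ))
      (∫ t, fourier k t * φ t ∂AddCircle.haarAddCircle)) (f : C(UnitAddCircle, ℂ)) :
    HasMean (fun n : ℕ => f (n • x) * fourier (-1) (n • θ))
      (∫ t, f t * φ t ∂AddCircle.haarAddCircle) := by
  have hint : ∀ g : C(UnitAddCircle, ℂ),
      Integrable (fun t => g t * φ t) AddCircle.haarAddCircle := fun g =>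
    integrable_of_continuous_circle (g * φ)
  have hspan : ∀ g ∈ Submodule.span ℂ (Set.range (fourier (T := 1))),
      HasMean (fun n : ℕ => g (n • x) * fourier (-1) (n • θ))
        (∫ t, g t * φ t ∂AddCircle.haarAddCircle) := by
    intro g hg
    induction hg using Submodule.span_induction with
    | mem g hg => obtain ⟨k, rfl⟩ := hg; exact hk k
    | zero => simpa using hasMean_const 0
    | add g₁ g₂ _ _ h₁ h₂ =>
      simp only [ContinuousMap.add_apply, add_mul]
      rw [integral_add (hint _) (hint _)]
      exact h₁.add h₂
    | smul a g _ h =>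
      simp only [ContinuousMap.smul_apply, smul_eq_mul, mul_assoc]
      rw [integral_const_mul]
      exact h.const_mul a
  refine HasMean.of_approx fun ε hε => ?_
  have hf : f ∈ (Submodule.span ℂ (Set.range (fourier (T := 1)))).topologicalClosure := by
    rw [span_fourier_closure_eq_top]; trivial
  obtain ⟨g, hg, hfg⟩ := Metric.mem_closure_iff.1 hf (ε / 2) (by positivity)
  have hle : ∀ t, ‖f t - g t‖ ≤ ε / 2 := fun t =>
    ((f - g).norm_coe_le_norm t).trans (by rw [← dist_eq_norm]; exact hfg.le)
  refine ⟨_, _, fun _ => ε / 2, ε / 2, hspan g hg, hasMean_const _, ?_, by linarith, ?_⟩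
  · intro n
    rw [← sub_mul, norm_mul, norm_fourier_apply, mul_one]
    exact hle _
  · rw [← integral_sub (hint f) (hint g)]
    refine (norm_integral_le_of_norm_le_const (C := ε / 2) (.of_forall fun t => ?_)).trans_lt ?_
    · rw [← sub_mul, norm_mul]
      nlinarith [hle t, hφ t, norm_nonneg (φ t)]
    · simpa using hε

theorem periodizedBernoulli_one_coe (y : ℝ) :
    periodizedBernoulli 1 (y : UnitAddCircle) = Int.fract y - 1 / 2 := by
  rw [← AddCircle.coe_fract, periodizedBernoulli, AddCircle.liftIco_coe_apply, bernoulliFun_one]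
  rw [zero_add]
  exact ⟨Int.fract_nonneg y, Int.fract_lt_one y⟩

theorem abs_periodizedBernoulli_one_le (t : UnitAddCircle) : |periodizedBernoulli 1 t| ≤ 1 / 2 := by
  induction t using QuotientAddGroup.induction_on with
  | H y =>
    rw [periodizedBernoulli_one_coe, abs_le]
    constructor <;> linarith [Int.fract_nonneg y, Int.fract_lt_one y]

theorem continuousAt_periodizedBernoulli_one {t : UnitAddCircle} (ht : t ≠ 0) :
    ContinuousAt (periodizedBernoulli 1) t := by
  have h := AddCircle.continuousAt_equivIco (1 : ℝ) 0 (x := t) (by simpa using ht)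
  exact ((Polynomial.continuous _).continuousAt.comp (continuous_subtype_val.continuousAt.comp h))

theorem periodizedBernoulli_one_aestronglyMeasurable :
    AEStronglyMeasurable (fun t => (periodizedBernoulli 1 t : ℂ)) AddCircle.haarAddCircle := by
  have h : Measurable (periodizedBernoulli 1) :=
    (Polynomial.continuous _).measurable.comp
      (measurable_subtype_coe.comp (AddCircle.measurableEquivIco 1 0).measurable)
  exact (Complex.measurable_ofReal.comp h).aestronglyMeasurable

/-- The cut-off `t ↦ min 1 (K ‖t‖)`, which vanishes at the jump `0` of the sawtooth function. -/
noncomputable def cutoff (K : ℕ) : C(UnitAddCircle, ℝ) :=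
  ⟨fun t => min 1 (K * ‖t‖), by fun_prop⟩

theorem cutoff_nonneg (K : ℕ) (t : UnitAddCircle) : 0 ≤ cutoff K t :=
  le_min zero_le_one (by positivity)

theorem cutoff_le_one (K : ℕ) (t : UnitAddCircle) : cutoff K t ≤ 1 := min_le_left _ _

theorem continuous_bernoulli_mul_cutoff (K : ℕ) :
    Continuous fun t => ((periodizedBernoulli 1 t * cutoff K t : ℝ) : ℂ) := by
  refine Complex.continuous_ofReal.comp (continuous_iff_continuousAt.2 fun t => ?_)
  by_cases ht : t = 0
  · subst ht
    have h0 : cutoff K 0 = 0 := by simp [cutoff]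
    rw [ContinuousAt, h0, mul_zero]
    have h1 : Tendsto (fun t => cutoff K t) (𝓝 0) (𝓝 0) := by
      simpa only [h0] using (cutoff K).continuous.tendsto 0
    refine squeeze_zero_norm (fun t => ?_) h1
    rw [norm_mul, Real.norm_eq_abs, Real.norm_of_nonneg (cutoff_nonneg K t)]
    nlinarith [abs_periodizedBernoulli_one_le t, cutoff_nonneg K t]
  · exact (continuousAt_periodizedBernoulli_one ht).mul (cutoff K).continuous.continuousAt

theorem tendsto_integral_one_sub_cutoff :
    Tendsto (fun K => ∫ t, (1 - cutoff K t) ∂AddCircle.haarAddCircle) atTop (𝓝 0) := by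
  have hnull : ∀ᵐ t : UnitAddCircle ∂AddCircle.haarAddCircle, t ≠ 0 := by
    have h : (volume : Measure UnitAddCircle) (Metric.closedBall 0 0) = 0 := by
      rw [AddCircle.volume_closedBall]; simp
    rw [AddCircle.volume_eq_smul_haarAddCircle] at h
    simpa [ae_iff] using h
  have h := tendsto_integral_of_dominated_convergence (μ := AddCircle.haarAddCircle)
    (F := fun K t => 1 - cutoff K t) (f := fun _ : UnitAddCircle => (0 : ℝ)) (fun _ => 1)
    (fun K => (continuous_const.sub (cutoff K).continuous).aestronglyMeasurable)
    (integrable_const _) (fun K => .of_forall fun t => ?_) ?_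
  · simpa using h
  · rw [Real.norm_of_nonneg (by linarith [cutoff_le_one K t])]
    linarith [cutoff_nonneg K t]
  · filter_upwards [hnull] with t ht
    refine tendsto_const_nhds.congr' ?_
    obtain ⟨K₀, hK₀⟩ := exists_nat_ge (‖t‖⁻¹)
    filter_upwards [eventually_ge_atTop K₀] with K hK
    have ht' : 0 < ‖t‖ := norm_pos_iff.2 ht
    have h1 : 1 ≤ (K : ℝ) * ‖t‖ := by
      rw [← div_le_iff₀ ht', one_div]
      exact hK₀.trans (by exact_mod_cast hK)
    simp [cutoff, min_eq_left h1]

theorem hasMean_fourier_mul_fourier (x θ : UnitAddCircle) (k : ℤ) :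
    HasMean (fun n : ℕ => fourier k (n • x) * fourier (-1) (n • θ))
      (if k • x = θ then 1 else 0) := by
  have h := hasMean_fourier (k • x - θ)
  simp only [sub_eq_zero] at h
  convert h using 2 with n
  rw [fourier_apply, fourier_apply, fourier_apply, ← Circle.coe_mul, ← AddCircle.toCircle_add]
  congr 2
  rw [one_zsmul, neg_one_zsmul, nsmul_sub, smul_comm, sub_eq_add_neg]

theorem integral_fourier_mul_fourier_neg (k h : ℤ) :
    ∫ t : UnitAddCircle, fourier k t * fourier (-h) t ∂AddCircle.haarAddCircle =
      if k = h then 1 else 0 := by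
  have h1 := congrFun (fourierCoeff_fourier (T := 1) k) h
  rw [fourierCoeff, Pi.single_apply] at h1
  simp only [smul_eq_mul, mul_comm (fourier (-h) _)] at h1
  rw [h1]
  simp only [eq_comm]

/-- Weyl equidistribution for an element of infinite order. -/
theorem hasMean_weyl {x : UnitAddCircle} (hx : ¬ IsOfFinAddOrder x) (f : C(UnitAddCircle, ℂ)) :
    HasMean (fun n : ℕ => f (n • x)) (∫ t, f t ∂AddCircle.haarAddCircle) := by
  have h := hasMean_continuous (x := x) (θ := 0) (φ := 1) (by simp) (fun k => ?_) f
  · simpa using h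
  · convert hasMean_fourier_mul_fourier x 0 k using 1
    have h1 := integral_fourier_mul_fourier_neg k 0
    have h2 : k • x = 0 ↔ k = 0 := by
      have := injective_zsmul_iff_not_isOfFinAddOrder.2 hx
      exact ⟨fun h => this (by simpa using h), fun h => by simp [h]⟩
    simpa [h2] using h1

/-- `hasMean_continuous` for the sawtooth function: the sequence is approximated by its product
with `cutoff K`, the error being at most `1 - cutoff K`, whose mean along `n • x` is its integral
because `x` has infinite order. -/
theorem hasMean_bernoulli {x θ : UnitAddCircle} (hx : ¬ IsOfFinAddOrder x)
    {φ : C(UnitAddCircle, ℂ)} (hφ : ∀ t, ‖φ t‖ ≤ 1)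
    (hk : ∀ k : ℤ, HasMean (fun n : ℕ => fourier k (n • x) * fourier (-1) (n • θ))
      (∫ t, fourier k t * φ t ∂AddCircle.haarAddCircle)) :
    HasMean (fun n : ℕ => (periodizedBernoulli 1 (n • x) : ℂ) * fourier (-1) (n • θ))
      (∫ t, (periodizedBernoulli 1 t : ℂ) * φ t ∂AddCircle.haarAddCircle) := by
  refine HasMean.of_approx fun ε hε => ?_
  obtain ⟨K, hK⟩ := (tendsto_integral_one_sub_cutoff.eventually (gt_mem_nhds hε)).exists
  let g : C(UnitAddCircle, ℂ) := ⟨_, continuous_bernoulli_mul_cutoff K⟩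
  let e : C(UnitAddCircle, ℂ) :=
    ⟨fun t => ((1 - cutoff K t : ℝ) : ℂ), Complex.continuous_ofReal.comp (by fun_prop)⟩
  have hle : ∀ t, ‖(periodizedBernoulli 1 t : ℂ) - g t‖ ≤ 1 - cutoff K t := by
    intro t
    have h1 : (periodizedBernoulli 1 t : ℂ) - g t =
        ((periodizedBernoulli 1 t * (1 - cutoff K t) : ℝ) : ℂ) := by
      simp only [g, ContinuousMap.coe_mk]; push_cast; ring
    rw [h1, Complex.norm_real, norm_mul, Real.norm_eq_abs,
      Real.norm_of_nonneg (by linarith [cutoff_le_one K t])]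
    nlinarith [abs_periodizedBernoulli_one_le t, cutoff_le_one K t]
  have he : Integrable (fun t => 1 - cutoff K t) AddCircle.haarAddCircle :=
    Continuous.integrable_of_hasCompactSupport (by fun_prop) (HasCompactSupport.of_compactSpace _)
  have hB : Integrable (fun t => (periodizedBernoulli 1 t : ℂ) * φ t) AddCircle.haarAddCircle := by
    refine Integrable.of_bound (C := 1)
      (periodizedBernoulli_one_aestronglyMeasurable.mul
        (map_continuous φ).aestronglyMeasurable) (.of_forall fun t => ?_)
    rw [norm_mul, Complex.norm_real, Real.norm_eq_abs]
    nlinarith [abs_periodizedBernoulli_one_le t, hφ t, norm_nonneg (φ t),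
      abs_nonneg (periodizedBernoulli 1 t)]
  refine ⟨_, _, fun n => 1 - cutoff K (n • x), _, hasMean_continuous hφ hk g, ?_, ?_, hK, ?_⟩
  · have h := hasMean_weyl hx e
    simp only [e, ContinuousMap.coe_mk] at h
    rwa [integral_complex_ofReal] at h
  · intro n
    rw [← sub_mul, norm_mul, norm_fourier_apply, mul_one]
    exact hle _
  · have hg : Integrable (fun t => g t * φ t) AddCircle.haarAddCircle :=
      integrable_of_continuous_circle (g * φ)
    rw [← integral_sub hB hg]
    refine (norm_integral_le_of_norm_le he (.of_forall fun t => ?_)).trans_lt hK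
    rw [← sub_mul, norm_mul]
    exact (mul_le_of_le_one_right (norm_nonneg _) (hφ t)).trans (hle t)

open Classical in
/-- `1 / h` if `θ = h • x` for an integer `h` (unique when `x` has infinite order), and `0` if `θ`
is not a multiple of `x`. -/
noncomputable def ratioCoeff (x θ : UnitAddCircle) : ℂ :=
  if h : ∃ h : ℤ, h • x = θ then 1 / (h.choose : ℂ) else 0

theorem ratioCoeff_zsmul {x : UnitAddCircle} (hx : ¬ IsOfFinAddOrder x) (h : ℤ) :
    ratioCoeff x (h • x) = 1 / (h : ℂ) := by
  have hex : ∃ h' : ℤ, h' • x = h • x := ⟨h, rfl⟩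
  rw [ratioCoeff, dif_pos hex, injective_zsmul_iff_not_isOfFinAddOrder.2 hx hex.choose_spec]

theorem ratioCoeff_of_forall_ne {x θ : UnitAddCircle} (h : ∀ h : ℤ, h • x ≠ θ) :
    ratioCoeff x θ = 0 :=
  dif_neg (by simpa using h)

/-- The Fourier–Bohr coefficients of the sawtooth function along the orbit of `x`. -/
theorem hasMean_bernoulli_ratioCoeff {x : UnitAddCircle} (hx : ¬ IsOfFinAddOrder x)
    (θ : UnitAddCircle) :
    HasMean (fun n : ℕ => (periodizedBernoulli 1 (n • x) : ℂ) * fourier (-1) (n • θ))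
      (-1 / (2 * Real.pi * Complex.I) * ratioCoeff x θ) := by
  by_cases hex : ∃ h : ℤ, h • x = θ
  · obtain ⟨h, rfl⟩ := hex
    have h1 := hasMean_bernoulli (θ := h • x) hx (φ := fourier (-h))
      (fun t => (norm_fourier_apply _ t).le) (fun k => by
        convert hasMean_fourier_mul_fourier x (h • x) k using 1
        rw [integral_fourier_mul_fourier_neg]
        simp only [(injective_zsmul_iff_not_isOfFinAddOrder.2 hx).eq_iff])
    convert h1 using 1
    have h2 := fourierCoeff_bernoulli_eq one_ne_zero h
    simp only [fourierCoeff, Function.comp_apply, smul_eq_mul, mul_comm (fourier (-h) _)] at h2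
    rw [h2, ratioCoeff_zsmul hx]
    simp [div_eq_mul_inv, mul_comm, mul_left_comm]
  · push Not at hex
    have h1 := hasMean_bernoulli (θ := θ) hx (φ := 0) (by simp) (fun k => by
        convert hasMean_fourier_mul_fourier x θ k using 1
        simp [hex k])
    simpa [ratioCoeff_of_forall_ne hex] using h1

/-- For `x` of finite order the sawtooth sequence is periodic, so it does not correlate with a
character of infinite order. -/
theorem hasMean_bernoulli_of_isOfFinAddOrder {x θ : UnitAddCircle} (hx : IsOfFinAddOrder x)
    (hθ : ¬ IsOfFinAddOrder θ) :
    HasMean (fun n : ℕ => (periodizedBernoulli 1 (n • x) : ℂ) * fourier (-1) (n • θ)) 0 := by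
  obtain ⟨q, hq, hqx⟩ := hx.exists_nsmul_eq_zero
  refine HasMean.zero_of_shift (q := q) (w := fourier (-1) (q • θ)) (C := 1) ?_ ?_ ?_
  · intro n
    rw [norm_mul, norm_fourier_apply, mul_one, Complex.norm_real, Real.norm_eq_abs]
    linarith [abs_periodizedBernoulli_one_le (n • x)]
  · intro h1
    rw [← fourier_eval_zero (T := 1) (-1), fourier_apply, fourier_apply] at h1
    have h2 := AddCircle.injective_toCircle one_ne_zero (Subtype.coe_injective h1)
    rw [smul_zero, neg_one_zsmul, neg_eq_zero] at h2
    exact hθ (isOfFinAddOrder_iff_nsmul_eq_zero.2 ⟨q, hq, h2⟩)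
  · intro n
    have h1 : fourier (-1) ((n + q) • θ) = fourier (-1) (q • θ) * fourier (-1) (n • θ) := by
      simp only [fourier_apply]
      rw [← Circle.coe_mul, ← AddCircle.toCircle_add, add_nsmul, smul_add, add_comm]
    rw [add_nsmul, hqx, add_zero, h1]
    ring

/-! ### Pairing off elements of an abelian group -/

/-- If the coefficients `c i θ`, equal to `1 / h` when `θ = h • x i` and to `0` when `θ` is not a
multiple of `x i`, add up to zero for every `θ` of infinite order, then the family `x` splits into
pairs of opposite elements. The pairing `σ` is extended by the identity outside `s`. -/
theorem pair_off_of_sum_eq_zero {ι G : Type*} [DecidableEq ι] [AddCommGroup G] (x : ι → G)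
    (c : ι → G → ℂ) (s : Finset ι) (hx : ∀ i ∈ s, ¬ IsOfFinAddOrder (x i))
    (hc : ∀ i ∈ s, ∀ h : ℤ, c i (h • x i) = 1 / (h : ℂ))
    (hc0 : ∀ i ∈ s, ∀ θ, (∀ h : ℤ, h • x i ≠ θ) → c i θ = 0)
    (hsum : ∀ θ, ¬ IsOfFinAddOrder θ → ∑ i ∈ s, c i θ = 0) :
    Even s.card ∧ ∃ σ : Equiv.Perm ι, (∀ i ∉ s, σ i = i) ∧
      ∀ i ∈ s, σ i ≠ i ∧ σ (σ i) = i ∧ σ i ∈ s ∧ x i + x (σ i) = 0 := by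
  classical
  induction hn : s.card using Nat.strong_induction_on generalizing s with
  | _ n ih =>
  subst hn
  rcases s.eq_empty_or_nonempty with rfl | hne
  · exact ⟨by simp, Equiv.refl ι, by simp, by simp⟩
  let r : ι → ι → Prop := fun i j =>
    ¬ IsOfFinAddOrder (x j) ∧ ∃ h : ℤ, 1 < |h| ∧ x j = h • x i
  have : IsStrictOrder ι r :=
    { irrefl := by
        rintro i ⟨h1, h, h2, h3⟩
        have h4 : (1 : ℤ) = h :=
          injective_zsmul_iff_not_isOfFinAddOrder.2 h1 (by simpa using h3)
        subst h4
        simp at h2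
      trans := by
        rintro i j k ⟨-, h, h2, h3⟩ ⟨h1', h', h2', h3'⟩
        refine ⟨h1', h' * h, ?_, by rw [h3', h3, mul_smul]⟩
        rw [abs_mul]
        nlinarith }
  obtain ⟨i, hi, hmin⟩ := (s.finite_toSet.wellFoundedOn (r := r)).has_min
    (Set.univ : Set (s : Set ι)) (by obtain ⟨i, hi⟩ := hne; exact ⟨⟨i, hi⟩, trivial⟩) |> fun ⟨i, _, h⟩ =>
      (⟨i.1, i.2, fun j hj => h ⟨j, hj⟩ trivial⟩ : ∃ i, i ∈ s ∧ ∀ j ∈ s, ¬ r j i)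
  have hinj := injective_zsmul_iff_not_isOfFinAddOrder.2 (hx i hi)
  -- At `θ = x i` every coefficient is `0`, `1` or `-1`, by minimality of `x i`.
  obtain ⟨j, hj, hij⟩ : ∃ j ∈ s, x i + x j = 0 := by
    by_contra! hcon
    have hnn : ∀ j ∈ s, c j (x i) = if x j = x i then 1 else 0 := by
      intro j hj
      by_cases hex : ∃ h : ℤ, h • x j = x i
      · obtain ⟨h, hh⟩ := hex
        have h1 : ¬ 1 < |h| := fun h1 => hmin j hj ⟨hx i hi, h, h1, hh.symm⟩
        have h2 := hc j hj h
        rw [hh] at h2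
        rw [not_lt, abs_le] at h1
        obtain ⟨h1, h1'⟩ := h1
        interval_cases h
        · exact absurd (by rw [← hh]; simp) (hcon j hj)
        · exact absurd (by rw [← hh]; simp) (hx i hi)
        · rw [h2, if_pos (by rw [← hh, one_zsmul])]; simp
      · rw [hc0 j hj _ (by simpa using hex), if_neg]
        intro h
        exact hex ⟨1, by rw [one_zsmul, h]⟩
    have h0 := hsum (x i) (hx i hi)
    rw [Finset.sum_congr rfl hnn, Finset.sum_boole, Nat.cast_eq_zero, Finset.card_eq_zero] at h0
    exact Finset.notMem_empty i (h0 ▸ Finset.mem_filter.2 ⟨hi, rfl⟩)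
  have hxj : x j = - x i := (neg_eq_of_add_eq_zero_right hij).symm
  have hne' : j ≠ i := by
    rintro rfl
    have : (2 : ℤ) = 0 := hinj (by simpa [two_zsmul] using hij)
    omega
  have hcij : ∀ θ, c i θ + c j θ = 0 := by
    intro θ
    by_cases hex : ∃ h : ℤ, h • x i = θ
    · obtain ⟨h, rfl⟩ := hex
      have h2 := hc j hj (-h)
      rw [hxj, neg_smul_neg] at h2
      rw [hc i hi, h2]
      push_cast
      rw [div_neg, add_neg_cancel]
    · push Not at hex
      rw [hc0 i hi _ hex, hc0 j hj, add_zero]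
      intro h hh
      exact hex (-h) (by rw [← hh, hxj, smul_neg, neg_smul])
  have hj' : j ∈ s.erase i := Finset.mem_erase.2 ⟨hne', hj⟩
  have hcard : ((s.erase i).erase j).card + 2 = s.card := by
    rw [← Finset.card_erase_add_one hi, ← Finset.card_erase_add_one hj']
  have hsub : ∀ a ∈ (s.erase i).erase j, a ∈ s := fun a ha =>
    Finset.mem_of_mem_erase (Finset.mem_of_mem_erase ha)
  obtain ⟨hev, σ, hσ0, hσ⟩ := ih _ (by omega) ((s.erase i).erase j)
    (fun a ha => hx a (hsub a ha)) (fun a ha => hc a (hsub a ha))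
    (fun a ha => hc0 a (hsub a ha))
    (fun θ hθ => by
      have h := hsum θ hθ
      rw [← Finset.add_sum_erase _ _ hi, ← Finset.add_sum_erase _ _ hj', ← add_assoc, hcij,
        zero_add] at h
      exact h) rfl
  refine ⟨by rw [← hcard]; exact hev.add (by decide), σ.trans (Equiv.swap i j), ?_, ?_⟩
  · intro a ha
    have hai : a ≠ i := fun h => ha (h ▸ hi)
    have haj : a ≠ j := fun h => ha (h ▸ hj)
    rw [Equiv.trans_apply, hσ0 a (fun h => ha (hsub a h)), Equiv.swap_apply_of_ne_of_ne hai haj]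
  · have hσi : σ i = i := hσ0 i (by simp)
    have hσj : σ j = j := hσ0 j (by simp)
    intro a ha
    by_cases hai : a = i
    · subst hai
      simp [hσi, hσj, hij, hj, hne']
    by_cases haj : a = j
    · subst haj
      simp [hσi, hσj, hi, hne'.symm, add_comm, hij]
    have ha' : a ∈ (s.erase i).erase j := by simp [hai, haj, ha]
    obtain ⟨h1, h2, h3, h4⟩ := hσ a ha'
    have h5 : σ a ≠ i ∧ σ a ≠ j := by simp at h3; tauto
    have h6 : (σ.trans (Equiv.swap i j)) a = σ a := by
      rw [Equiv.trans_apply, Equiv.swap_apply_of_ne_of_ne h5.1 h5.2]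
    rw [h6]
    refine ⟨h1, ?_, hsub _ h3, h4⟩
    rw [Equiv.trans_apply, h2, Equiv.swap_apply_of_ne_of_ne hai haj]

/-! ### Exact covers by Beatty sequences -/

theorem beattyCount_zero_natCast {α : ℝ} (hα : 0 < α) {N : ℕ} (hN : 0 < N) :
    (beattyCount α 0 N : ℝ) = (⌈((N + 1 : ℕ) : ℝ) * α⁻¹⌉₊ : ℝ) - ⌈(N : ℝ) * α⁻¹⌉₊ := by
  have hle : ⌈(N : ℝ) * α⁻¹⌉₊ ≤ ⌈((N + 1 : ℕ) : ℝ) * α⁻¹⌉₊ := by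
    gcongr
    exact Nat.le_succ N
  have h : ∀ n : ℕ, (0 < n ∧ ⌊(n : ℝ) * α + 0⌋ = (N : ℤ)) ↔
      n ∈ Finset.Ico ⌈(N : ℝ) * α⁻¹⌉₊ ⌈((N + 1 : ℕ) : ℝ) * α⁻¹⌉₊ := by
    intro n
    rw [Finset.mem_Ico, Nat.ceil_le, Nat.lt_ceil, ← div_eq_mul_inv, ← div_eq_mul_inv,
      div_le_iff₀ hα, lt_div_iff₀ hα, Int.floor_eq_iff, add_zero]
    push_cast
    refine ⟨fun h => h.2, fun h => ⟨Nat.pos_of_ne_zero ?_, h⟩⟩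
    rintro rfl
    have : (0 : ℝ) < N := by exact_mod_cast hN
    simp at h
    omega
  rw [beattyCount, Nat.card_congr (Equiv.subtypeEquivRight h), Nat.card_eq_fintype_card,
    Fintype.card_coe, Nat.card_Ico, Nat.cast_sub hle]

theorem natCeil_mul_eq {γ : ℝ} (hγ : 0 ≤ γ) (n : ℕ) :
    (⌈(n : ℝ) * γ⌉₊ : ℝ) =
      n * γ + 1 / 2 + periodizedBernoulli 1 (n • ((-γ : ℝ) : UnitAddCircle)) := by
  rw [← AddCircle.coe_nsmul, periodizedBernoulli_one_coe, nsmul_eq_mul, mul_neg, Int.fract,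
    Int.floor_neg, natCast_ceil_eq_intCast_ceil (by positivity)]
  push_cast
  ring

/-- Along an eventual exact cover the sum of the sawtooth sequences is eventually constant: its
increments are eventually equal to `m - ∑ 1 / α i`, and it is bounded. -/
theorem eventually_sum_bernoulli_eq {m k : ℕ} {α : Fin k → ℝ} (hpos : ∀ i, 0 < α i)
    (h : IsEEC α (fun _ => 0) m) :
    ∃ C : ℝ, ∀ᶠ n : ℕ in atTop,
      ∑ i, periodizedBernoulli 1 (n • ((-(α i)⁻¹ : ℝ) : UnitAddCircle)) = C := by
  obtain ⟨N₀, hN₀⟩ := h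
  set P : ℕ → ℝ := fun n =>
    ∑ i, periodizedBernoulli 1 (n • ((-(α i)⁻¹ : ℝ) : UnitAddCircle)) with hP
  have hPb : ∀ n, |P n| ≤ k := by
    intro n
    refine (Finset.abs_sum_le_sum_abs _ _).trans ?_
    refine (Finset.sum_le_sum (g := fun _ => (1 : ℝ)) fun i _ => ?_).trans (by simp)
    linarith [abs_periodizedBernoulli_one_le (n • ((-(α i)⁻¹ : ℝ) : UnitAddCircle))]
  obtain ⟨δ, hδ⟩ : ∃ δ, δ = m - ∑ i, (α i)⁻¹ := ⟨_, rfl⟩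
  set N₁ := N₀.toNat + 1 with hN₁
  have hstep : ∀ n ≥ N₁, P (n + 1) = P n + δ := by
    intro n hn
    have h1 := congrArg (Nat.cast (R := ℝ)) (hN₀ n (by omega))
    rw [Nat.cast_sum] at h1
    have h2 : ∀ i ∈ Finset.univ, (beattyCount (α i) 0 n : ℝ) = (α i)⁻¹ +
        (periodizedBernoulli 1 ((n + 1) • ((-(α i)⁻¹ : ℝ) : UnitAddCircle)) -
          periodizedBernoulli 1 (n • ((-(α i)⁻¹ : ℝ) : UnitAddCircle))) := by
      intro i _
      have hi : 0 ≤ (α i)⁻¹ := (inv_pos.2 (hpos i)).le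
      rw [beattyCount_zero_natCast (hpos i) (by omega), natCeil_mul_eq hi, natCeil_mul_eq hi]
      push_cast
      ring
    rw [Finset.sum_congr rfl h2, Finset.sum_add_distrib, Finset.sum_sub_distrib] at h1
    simp only [hP]
    linarith
  have hlin : ∀ j : ℕ, P (N₁ + j) = P N₁ + j * δ := by
    intro j
    induction j with
    | zero => simp
    | succ j ih =>
      rw [← add_assoc, hstep _ (by omega), ih]
      push_cast
      ring
  have hδ0 : δ = 0 := by
    by_contra hne
    obtain ⟨j, hj⟩ := exists_nat_gt (2 * k / |δ|)
    rw [div_lt_iff₀ (abs_pos.2 hne)] at hj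
    have h1 : (j : ℝ) * δ = P (N₁ + j) - P N₁ := by rw [hlin]; ring
    have h2 : (j : ℝ) * |δ| ≤ k + k := by
      rw [← Nat.abs_cast j, ← abs_mul, h1]
      exact (abs_sub _ _).trans (add_le_add (hPb _) (hPb _))
    linarith
  refine ⟨P N₁, eventually_atTop.2 ⟨N₁, fun n hn => ?_⟩⟩
  obtain ⟨j, rfl⟩ := Nat.exists_eq_add_of_le hn
  change P (N₁ + j) = P N₁
  rw [hlin, hδ0, mul_zero, add_zero]

theorem not_isOfFinAddOrder_coe_iff {y : ℝ} :
    ¬ IsOfFinAddOrder ((-y⁻¹ : ℝ) : UnitAddCircle) ↔ Irrational y := by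
  rw [AddCircle.isOfFinAddOrder_iff_exists_rat_eq_div, div_one, ← irrational_inv_iff,
    ← irrational_neg_iff]
  rfl

/-- Comparing the correlations of both sides of `eventually_sum_bernoulli_eq` with a character of
infinite order: the rational `α i` and the constant do not contribute. -/
theorem sum_ratioCoeff_eq_zero {m k : ℕ} {α : Fin k → ℝ} (hpos : ∀ i, 0 < α i)
    (h : IsEEC α (fun _ => 0) m) (s : Finset (Fin k)) (hs : ∀ i, i ∈ s ↔ Irrational (α i))
    (θ : UnitAddCircle) (hθ : ¬ IsOfFinAddOrder θ) :
    ∑ i ∈ s, ratioCoeff ((-(α i)⁻¹ : ℝ) : UnitAddCircle) θ = 0 := by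
  classical
  obtain ⟨C, hC⟩ := eventually_sum_bernoulli_eq hpos h
  have h1 : HasMean (fun n : ℕ => ∑ i,
      (periodizedBernoulli 1 (n • ((-(α i)⁻¹ : ℝ) : UnitAddCircle)) : ℂ) * fourier (-1) (n • θ))
      (∑ i, if i ∈ s then
        -1 / (2 * Real.pi * Complex.I) * ratioCoeff ((-(α i)⁻¹ : ℝ) : UnitAddCircle) θ else 0) := by
    refine HasMean.sum _ fun i _ => ?_
    split_ifs with hi
    · exact hasMean_bernoulli_ratioCoeff (not_isOfFinAddOrder_coe_iff.2 ((hs i).1 hi)) θ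
    · exact hasMean_bernoulli_of_isOfFinAddOrder
        (not_not.1 fun h => hi ((hs i).2 (not_isOfFinAddOrder_coe_iff.1 h))) hθ
  have h2 : HasMean (fun n : ℕ => (-C : ℂ) * fourier (-1) (n • θ)) 0 := by
    have h3 := (hasMean_fourier (-θ)).const_mul (-C : ℂ)
    rw [if_neg (fun h0 => hθ (by rw [neg_eq_zero.1 h0]; exact IsOfFinAddOrder.zero)), mul_zero] at h3
    convert h3 using 3 with n
    rw [fourier_apply, fourier_apply, one_zsmul, neg_one_zsmul, smul_neg]
  have h3 := (h1.add h2).unique (HasMean.zero_of_eventually (hC.mono fun n hn => by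
    rw [← Finset.sum_mul, ← add_mul, ← hn]
    push_cast
    ring))
  rw [add_zero, Finset.sum_ite_mem, Finset.univ_inter, ← Finset.mul_sum] at h3
  refine (mul_eq_zero.1 h3).resolve_left ?_
  simp [Real.pi_ne_zero]

theorem irrational_indices_pair_off (m k : ℕ) (hm : 0 < m) (α : Fin k → ℝ)
    (hpos : ∀ i, 0 < α i) (hirr : ∃ i, Irrational (α i))
    (h : IsEEC α (fun _ => 0) m) :
    Even {i : Fin k | Irrational (α i)}.ncard ∧
      ∃ σ : Equiv.Perm (Fin k), ∀ i, Irrational (α i) →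
        σ i ≠ i ∧ σ (σ i) = i ∧ Irrational (α (σ i)) ∧
        ∃ z : ℤ, 1 / α i + 1 / α (σ i) = (z : ℝ) := by
  classical
  obtain ⟨s, hs'⟩ := (Set.toFinite {i : Fin k | Irrational (α i)}).exists_finset_coe
  have hs : ∀ i, i ∈ s ↔ Irrational (α i) := fun i => by
    rw [← Finset.mem_coe, hs', Set.mem_ofPred_eq]
  have hx : ∀ i ∈ s, ¬ IsOfFinAddOrder ((-(α i)⁻¹ : ℝ) : UnitAddCircle) := fun i hi =>
    not_isOfFinAddOrder_coe_iff.2 ((hs i).1 hi)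
  obtain ⟨hev, σ, -, hσ⟩ := pair_off_of_sum_eq_zero
    (fun i => ((-(α i)⁻¹ : ℝ) : UnitAddCircle)) (fun i => ratioCoeff ((-(α i)⁻¹ : ℝ) : UnitAddCircle))
    s hx (fun i hi => ratioCoeff_zsmul (hx i hi)) (fun i _ θ => ratioCoeff_of_forall_ne)
    (sum_ratioCoeff_eq_zero hpos h s hs)
  refine ⟨by rwa [← hs', Set.ncard_coe_finset], σ, fun i hi => ?_⟩
  obtain ⟨h1, h2, h3, h4⟩ := hσ i ((hs i).2 hi)
  refine ⟨h1, h2, (hs _).1 h3, ?_⟩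
  rw [← AddCircle.coe_add, AddCircle.coe_eq_zero_iff] at h4
  obtain ⟨z, hz⟩ := h4
  refine ⟨-z, ?_⟩
  rw [zsmul_eq_mul, mul_one] at hz
  rw [one_div, one_div]
  push_cast
  linarith
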